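/- arXiv:2010.01129 — 9 statements merged into one kernel-verified Lean document; each statement's English description precedes it below -/
import Mathlib

section
/- For every real a ≥ 0 and every real b, there is no point z ∈ ℂ satisfying g_{a,b}(z) = z and g_{a,b}'(z) = 1; that is, the real cubic polynomial g_{a,b} has no fixed point of multiplier one. -/
/-- For real parameters `a ≥ 0` and `b`, the real cubic polynomial
`g_{a,b}(z) = -z^3 - 3a^2 z + b` (with derivative `g'_{a,b}(z) = -3z^2 - 3a^2`)
has no fixed point of multiplier one. -/
theorem no_multiplier_one_fixed_point (a b : ℝ) (ha : 0 ≤ a) :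
    ¬ ∃ z : ℂ, (-z ^ 3 - 3 * (a : ℂ) ^ 2 * z + (b : ℂ) = z) ∧
      (-3 * z ^ 2 - 3 * (a : ℂ) ^ 2 = 1) := by
  rintro ⟨z, h1, h2⟩
  have hz : z ^ 2 = -(1 / 3 + (a : ℂ) ^ 2) := by linear_combination (-1 / 3) * h2
  have hb : (b : ℂ) = z * (2 / 3 + 2 * (a : ℂ) ^ 2) := by
    linear_combination h1 + z * hz
  have hsq : (b : ℂ) ^ 2 = -(1 / 3 + (a : ℂ) ^ 2) * (2 / 3 + 2 * (a : ℂ) ^ 2) ^ 2 := by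
    rw [hb, mul_pow, hz]
  have hr : b ^ 2 = -(1 / 3 + a ^ 2) * (2 / 3 + 2 * a ^ 2) ^ 2 := by
    apply Complex.ofReal_injective
    push_cast
    exact hsq
  have hpos : 0 < (1 / 3 + a ^ 2) * (2 / 3 + 2 * a ^ 2) ^ 2 := by positivity
  nlinarith [sq_nonneg b]
end

section
/- For all real a ≥ 0 and real b, the polynomial g_{a,b} has a fixed point of multiplier −1 (i.e. there exists z ∈ ℂ with g_{a,b}(z) = z and g_{a,b}'(z) = −1) if and only if 4(3a² − 1)(3a² + 2)² + 27b² = 0. -/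
/-- For real parameters `a ≥ 0` and `b`, the cubic `g_{a,b}(z) = -z^3 - 3a^2 z + b`
has a fixed point of multiplier `-1` (the multiplier being `g'_{a,b}(z) = -3z^2 - 3a^2`)
if and only if `4(3a^2 - 1)(3a^2 + 2)^2 + 27 b^2 = 0`. -/
theorem per_one_neg_one_curve (a b : ℝ) (ha : 0 ≤ a) :
    (∃ z : ℂ, (-z ^ 3 - 3 * (a : ℂ) ^ 2 * z + (b : ℂ) = z) ∧
      (-3 * z ^ 2 - 3 * (a : ℂ) ^ 2 = -1)) ↔
    4 * (3 * a ^ 2 - 1) * (3 * a ^ 2 + 2) ^ 2 + 27 * b ^ 2 = 0 := by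
  constructor
  · rintro ⟨z, h1, h2⟩
    have h3 : 3 * (b : ℂ) = z * (4 + 6 * (a : ℂ) ^ 2) := by
      linear_combination 3 * h1 - z * h2
    have h4 : (4 * (3 * (a : ℂ) ^ 2 - 1) * (3 * (a : ℂ) ^ 2 + 2) ^ 2 + 27 * (b : ℂ) ^ 2) = 0 := by
      linear_combination 3 * (3 * (b : ℂ) + z * (4 + 6 * (a : ℂ) ^ 2)) * h3
        - 4 * (3 * (a : ℂ) ^ 2 + 2) ^ 2 * h2
    exact_mod_cast h4
  · intro h
    have hp : (3 * a ^ 2 + 2) ≠ 0 := by positivity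
    obtain ⟨x, hx⟩ : ∃ x : ℝ, 3 * b = x * (2 * (3 * a ^ 2 + 2)) :=
      ⟨3 * b / (2 * (3 * a ^ 2 + 2)), by field_simp⟩
    have h2 : -3 * x ^ 2 - 3 * a ^ 2 = -1 := by
      have h5 : (3 * a ^ 2 + 2) ^ 2 * (3 * x ^ 2 + 3 * a ^ 2 - 1) = 0 := by
        linear_combination h / 4 - 3 / 4 * (3 * b + x * (2 * (3 * a ^ 2 + 2))) * hx
      rcases mul_eq_zero.mp h5 with h6 | h6
      · exact absurd h6 (pow_ne_zero 2 hp)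
      · linarith
    have h1 : -x ^ 3 - 3 * a ^ 2 * x + b = x := by
      linear_combination hx / 3 + x / 3 * h2
    exact ⟨(x : ℂ), by exact_mod_cast h1, by exact_mod_cast h2⟩
end

section
/- For all real a ≥ 0 and real b, the unique real fixed point x of g_{a,b} is attracting, i.e. |g_{a,b}'(x)| < 1, if and only if 27b² < −4(3a² − 1)(3a² + 2)²; in particular this forces a < 1/√3. -/
/-- For real parameters `a ≥ 0` and `b`, the (unique) real fixed point `x` of
`g_{a,b}(z) = -z^3 - 3a^2 z + b` is attracting, i.e. `|g'_{a,b}(x)| < 1` where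
`g'_{a,b}(x) = -3x^2 - 3a^2`, if and only if `27 b^2 < -4(3a^2-1)(3a^2+2)^2`;
in particular attractivity forces `a < 1/√3`. -/
theorem real_fixed_point_attracting_iff (a b x : ℝ) (ha : 0 ≤ a)
    (hfix : -x ^ 3 - 3 * a ^ 2 * x + b = x) :
    (|(-3 * x ^ 2 - 3 * a ^ 2)| < 1 ↔
      27 * b ^ 2 < -4 * (3 * a ^ 2 - 1) * (3 * a ^ 2 + 2) ^ 2) ∧
    (|(-3 * x ^ 2 - 3 * a ^ 2)| < 1 → a < 1 / Real.sqrt 3) := by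
  have hb : b = x ^ 3 + (3 * a ^ 2 + 1) * x := by linarith
  have habs : |(-3 * x ^ 2 - 3 * a ^ 2)| = 3 * x ^ 2 + 3 * a ^ 2 := by
    rw [abs_of_nonpos (by nlinarith [sq_nonneg x, sq_nonneg a])]
    ring
  rw [habs]
  obtain ⟨s, hs⟩ : ∃ s, s = 3 * x ^ 2 := ⟨_, rfl⟩
  obtain ⟨A, hA⟩ : ∃ A, A = 3 * a ^ 2 := ⟨_, rfl⟩
  have hs0 : 0 ≤ s := by rw [hs]; positivity
  have hA0 : 0 ≤ A := by rw [hA]; positivity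
  have hQ : 0 < (s ^ 2 + s * (1 - A) + (1 - A) ^ 2)
      + (3 * A + 3) * (2 * s + A + 5) := by
    nlinarith [sq_nonneg (s + (1 - A) / 2), sq_nonneg (1 - A), mul_nonneg hA0 hs0,
      mul_nonneg hA0 hA0]
  have key : -4 * (3 * a ^ 2 - 1) * (3 * a ^ 2 + 2) ^ 2 - 27 * b ^ 2
      = (1 - (s + A)) * ((s ^ 2 + s * (1 - A) + (1 - A) ^ 2)
      + (3 * A + 3) * (2 * s + A + 5)) := by
    rw [hb, hs, hA]
    ring
  refine ⟨?_, fun h => ?_⟩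
  · rw [← sub_pos (b := 27 * b ^ 2), key, mul_pos_iff_of_pos_right hQ, sub_pos, hs, hA]
  · have h3 : 0 < Real.sqrt 3 := by positivity
    rw [lt_div_iff₀ h3]
    have hsq : Real.sqrt 3 ^ 2 = 3 := Real.sq_sqrt (by norm_num)
    have : (a * Real.sqrt 3) ^ 2 < 1 := by
      rw [mul_pow, hsq]
      nlinarith [sq_nonneg x]
    nlinarith [mul_nonneg ha h3.le]
end

section
/- Let a₀ > 0 and b₀ ∈ ℝ, and suppose that for some integer n ≥ 1 one has g_{a₀,b₀}^{∘n}(ia₀) = −ia₀ (so that both critical points ±ia₀ of g_{a₀,b₀} are superattracting periodic points). Then the intersection of the filled Julia set K(g_{a₀,b₀}) with the real line is exactly the singleton {x₀}, where x₀ is the unique real fixed point of g_{a₀,b₀}. -/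
/-- The real cubic polynomial `g_{a,b}(z) = -z^3 - 3a^2 z + b`. -/
def gcubic (a b : ℝ) : ℂ → ℂ := fun z => -z ^ 3 - 3 * (a : ℂ) ^ 2 * z + (b : ℂ)

open Complex Metric

theorem const_of_deriv_zero {f : ℂ → ℂ} {c : ℂ} {r : ℝ}
    (hf : ∀ z ∈ ball c r, HasDerivAt f 0 z) {z : ℂ} (hz : z ∈ ball c r) : f z = f c := by
  have hc : c ∈ ball c r := mem_ball_self (pos_of_mem_ball hz)
  have := (convex_ball c r).norm_image_sub_le_of_norm_hasDerivWithin_le (C := 0)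
    (fun x hx => (hf x hx).hasDerivWithinAt) (by simp) hc hz
  simpa [sub_eq_zero] using this

theorem arsinh_lift {F : ℂ → ℂ} {c : ℂ} {r : ℝ} (hr : 0 < r)
    (hF : DifferentiableOn ℂ F (ball c r)) (h0 : ∀ z ∈ ball c r, 1 + F z ^ 2 ≠ 0)
    (u : ℂ) (hu : sinh u = F c) :
    ∃ φ : ℂ → ℂ, DifferentiableOn ℂ φ (ball c r) ∧ φ c = u ∧ ∀ z ∈ ball c r, sinh (φ z) = F z := by
  have hc : c ∈ ball c r := mem_ball_self hr
  have hdF : DifferentiableOn ℂ (deriv F) (ball c r) := hF.deriv isOpen_ball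
  have hFd : ∀ z ∈ ball c r, HasDerivAt F (deriv F z) z := fun z hz =>
    (hF.differentiableAt (isOpen_ball.mem_nhds hz)).hasDerivAt
  have e1 : DifferentiableOn ℂ (fun z => 2 * F z * deriv F z / (1 + F z ^ 2)) (ball c r) :=
    DifferentiableOn.div (by fun_prop) (by fun_prop) h0
  obtain ⟨L, hLc, hL⟩ := e1.isExactOn_ball.with_val_at c 0
  have hcosh : cosh u ^ 2 = 1 + F c ^ 2 := by rw [cosh_sq, hu]; ring
  set S : ℂ → ℂ := fun z => cosh u * exp (L z / 2) with hS
  have hLD : DifferentiableOn ℂ L (ball c r) := fun z hz =>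
    (hL z hz).differentiableAt.differentiableWithinAt
  have key1 : ∀ z ∈ ball c r, (1 + F z ^ 2) * exp (-L z) = 1 + F c ^ 2 := by
    intro z hz
    have := const_of_deriv_zero (f := fun z => (1 + F z ^ 2) * exp (-L z)) (c := c) (r := r) ?_ hz
    · simpa [hLc] using this
    · intro w hw
      have h := (((hFd w hw).pow 2).const_add 1).mul ((hL w hw).neg.cexp)
      refine h.congr_deriv ?_
      have := h0 w hw
      simp only [Pi.pow_apply, Pi.add_apply]
      field_simp
      push_cast
      ring
  have hS2 : ∀ z ∈ ball c r, S z ^ 2 = 1 + F z ^ 2 := by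
    intro z hz
    have h := key1 z hz
    have h2 : S z ^ 2 = cosh u ^ 2 * exp (L z) := by
      simp only [hS, mul_pow, ← Complex.exp_nat_mul]
      congr 2; push_cast; ring
    rw [h2, hcosh, ← h, mul_assoc, ← Complex.exp_add]; simp
  have hS0 : ∀ z ∈ ball c r, S z ≠ 0 := by
    intro z hz h
    apply h0 z hz
    rw [← hS2 z hz, h]; simp
  have hSd : ∀ z ∈ ball c r, HasDerivAt S (F z * deriv F z / S z) z := by
    intro z hz
    have h := (((hL z hz).div_const 2).cexp).const_mul (cosh u)
    refine h.congr_deriv ?_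
    rw [← mul_assoc, show cosh u * exp (L z / 2) = S z from rfl, ← hS2 z hz]
    have := hS0 z hz
    field_simp
  have e2 : DifferentiableOn ℂ (fun z => deriv F z / S z) (ball c r) :=
    hdF.div (fun z hz => (hSd z hz).differentiableAt.differentiableWithinAt) hS0
  obtain ⟨φ, hφc, hφ⟩ := e2.isExactOn_ball.with_val_at c u
  refine ⟨φ, fun z hz => (hφ z hz).differentiableAt.differentiableWithinAt, hφc, fun z hz => ?_⟩
  have key2 : (F z + S z) * exp (-φ z) = 1 := by
    have := const_of_deriv_zero (f := fun z => (F z + S z) * exp (-φ z)) (c := c) (r := r) ?_ hz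
    · simp only [this, hφc]
      have : S c = cosh u := by simp [hS, hLc]
      rw [this, ← hu, sinh_add_cosh, ← Complex.exp_add]; simp
    · intro w hw
      have h := ((hFd w hw).add (hSd w hw)).mul ((hφ w hw).neg.cexp)
      refine h.congr_deriv ?_
      have := hS0 w hw
      simp only [Pi.pow_apply, Pi.add_apply]
      field_simp
      ring
  have h3 : F z + S z = exp (φ z) := by
    have : exp (-φ z) * exp (φ z) = 1 := by rw [← Complex.exp_add]; simp
    linear_combination exp (φ z) * key2 - (F z + S z) * this
  have h4 : S z - F z = exp (-φ z) := by
    have h5 := hS2 z hz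
    linear_combination (-(S z - F z)) * key2 + exp (-φ z) * h5
  rw [Complex.sinh]
  linear_combination -(1/2) * h3 + (1/2) * h4

theorem sinh_surj (w : ℂ) : ∃ u : ℂ, sinh u = w := by
  obtain ⟨v, hv⟩ := Complex.sin_surjective (w * I)
  refine ⟨-(v * I), ?_⟩
  rw [Complex.sinh_neg, Complex.sinh_mul_I, hv, mul_assoc, I_mul_I]; ring

theorem gcubic_lift {a b : ℝ} (ha : 0 < a) {f : ℂ → ℂ} {c : ℂ} {r : ℝ} (hr : 0 < r)
    (hf : DifferentiableOn ℂ f (ball c r))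
    (h1 : ∀ z ∈ ball c r, f z ≠ gcubic a b (I * a))
    (h2 : ∀ z ∈ ball c r, f z ≠ gcubic a b (-(I * a)))
    (x : ℂ) (hx : gcubic a b x = f c) :
    ∃ h : ℂ → ℂ, DifferentiableOn ℂ h (ball c r) ∧ h c = x ∧
      ∀ z ∈ ball c r, gcubic a b (h z) = f z := by
  have ha' : (a : ℂ) ≠ 0 := by exact_mod_cast ha.ne'
  have hI : I ^ 2 = -1 := I_sq
  have hI3 : I ^ 3 = -I := by rw [pow_succ, I_sq]; ring
  obtain ⟨u, hu⟩ := sinh_surj (x / (2 * a))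
  have hu' : x = 2 * a * sinh u := by rw [hu]; field_simp
  obtain ⟨φ, hφd, hφc, hφ⟩ := arsinh_lift (F := fun z => (b - f z) / (2 * a ^ 3)) hr (by fun_prop)
    (by
      intro z hz h
      have h' : ((b - f z) / (2 * a ^ 3) - I) * ((b - f z) / (2 * a ^ 3) + I) = 0 := by
        linear_combination h - hI
      rcases mul_eq_zero.1 h' with h | h
      · apply h1 z hz
        have : (b - f z) = 2 * a ^ 3 * I := by field_simp at h; linear_combination h
        simp only [gcubic, mul_pow, hI3]
        linear_combination -this
      · apply h2 z hz
        have : (b - f z) = -2 * a ^ 3 * I := by field_simp at h; linear_combination h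
        have h3 : (-(I * a) : ℂ) ^ 3 = I * a ^ 3 := by
          rw [neg_pow, mul_pow, hI3]; ring
        simp only [gcubic, h3]
        linear_combination -this) (3 * u)
    (by
      rw [sinh_three_mul, ← hx, hu']
      simp only [gcubic]
      field_simp
      ring)
  refine ⟨fun z => 2 * a * sinh (φ z / 3), ?_, ?_, fun z hz => ?_⟩
  · intro z hz
    have : DifferentiableAt ℂ φ z := hφd.differentiableAt (isOpen_ball.mem_nhds hz)
    apply DifferentiableAt.differentiableWithinAt
    fun_prop
  · simp [hφc, hu']
  · have h := hφ z hz
    rw [show φ z = 3 * (φ z / 3) by ring, sinh_three_mul] at h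
    field_simp at h
    simp only [gcubic]
    linear_combination -h

theorem inverse_branch {a b : ℝ} (ha : 0 < a) {δ : ℝ} (hδ : 0 < δ)
    (h1 : ∀ j, δ ≤ |((gcubic a b)^[j+1] (I * a)).im|)
    (h2 : ∀ j, δ ≤ |((gcubic a b)^[j+1] (-(I * a))).im|) (k : ℕ) :
    ∀ (x : ℂ) (y : ℂ), (gcubic a b)^[k] x = y → y.im = 0 →
    ∃ H : ℂ → ℂ, DifferentiableOn ℂ H (ball y δ) ∧ H y = x ∧
      ∀ w ∈ ball y δ, (gcubic a b)^[k] (H w) = w := by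
  induction k with
  | zero =>
    intro x y h _
    exact ⟨id, differentiableOn_id, by simpa using h.symm, by simp⟩
  | succ k ih =>
    intro x y h hy
    rw [Function.iterate_succ_apply] at h
    obtain ⟨H, hd, hc, hH⟩ := ih _ y h hy
    have aux : ∀ w ∈ ball y δ, |w.im| < δ := by
      intro w hw
      have := abs_im_le_norm (w - y)
      rw [mem_ball, dist_eq_norm] at hw
      simp only [sub_im, hy, sub_zero] at this
      linarith
    obtain ⟨h', hd', hc', hH'⟩ := gcubic_lift (b := b) ha hδ hd
      (fun z hz e => by
        have h3 := hH z hz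
        rw [e, ← Function.iterate_succ_apply] at h3
        have h4 := h1 k
        rw [h3] at h4
        exact absurd (aux z hz) (not_lt.2 h4))
      (fun z hz e => by
        have h3 := hH z hz
        rw [e, ← Function.iterate_succ_apply] at h3
        have h4 := h2 k
        rw [h3] at h4
        exact absurd (aux z hz) (not_lt.2 h4)) x hc.symm
    refine ⟨h', hd', hc', fun w hw => ?_⟩
    rw [Function.iterate_succ_apply, hH' w hw, hH w hw]

theorem gcubic_diff (a b : ℝ) (k : ℕ) : Differentiable ℂ (gcubic a b)^[k] := by
  apply Differentiable.iterate
  unfold gcubic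
  fun_prop

theorem gcubic_escape (a b : ℝ) {R : ℝ} (hR : 2 + 3 * a ^ 2 + |b| ≤ R) {z : ℂ} (hz : R < ‖z‖) :
    ‖z‖ < ‖gcubic a b z‖ := by
  have h1 : ‖z ^ 3‖ ≤ ‖gcubic a b z‖ + ‖3 * (a : ℂ) ^ 2 * z‖ + ‖(b : ℂ)‖ := by
    have : z ^ 3 = - gcubic a b z - 3 * (a : ℂ) ^ 2 * z + b := by simp only [gcubic]; ring
    rw [this]
    refine (norm_add_le _ _).trans ?_
    gcongr
    refine (norm_sub_le _ _).trans ?_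
    rw [norm_neg]
  simp only [norm_pow, norm_mul, Complex.norm_real, Real.norm_eq_abs, sq_abs] at h1
  norm_num at h1
  have hb := abs_nonneg b
  have ha := sq_nonneg a
  have h2 : 2 + 3 * a ^ 2 + |b| < ‖z‖ := by linarith
  have h3 : 2 < ‖z‖ := by linarith
  have h4 : (2 + 3 * a ^ 2 + |b|) * ‖z‖ < ‖z‖ * ‖z‖ := by gcongr
  nlinarith

theorem gcubic_trap (a b : ℝ) {R : ℝ} (hR : 2 + 3 * a ^ 2 + |b| ≤ R) (k : ℕ) {z : ℂ}
    (hz : ‖(gcubic a b)^[k] z‖ ≤ R) : ‖z‖ ≤ R := by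
  induction k with
  | zero => simpa using hz
  | succ k ih =>
    apply ih
    by_contra! h
    rw [Function.iterate_succ_apply'] at hz
    linarith [gcubic_escape a b hR h]

theorem deriv_lower {a b : ℝ} (ha : 0 < a) {δ : ℝ} (hδ : 0 < δ)
    (h1 : ∀ j, δ ≤ |((gcubic a b)^[j+1] (I * a)).im|)
    (h2 : ∀ j, δ ≤ |((gcubic a b)^[j+1] (-(I * a))).im|) {R : ℝ}
    (hR : 2 + 3 * a ^ 2 + |b| ≤ R) (k : ℕ) (x : ℂ) (him : ((gcubic a b)^[k] x).im = 0)
    (hx : ‖(gcubic a b)^[k] x‖ + δ ≤ R) :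
    δ / (2 * R) ≤ ‖deriv (gcubic a b)^[k] x‖ := by
  obtain ⟨H, hd, hc, hH⟩ := inverse_branch ha hδ h1 h2 k x _ rfl him
  set y := (gcubic a b)^[k] x with hy
  have hR0 : 0 < R := by
    have := abs_nonneg b
    have := sq_nonneg a
    linarith
  have hyb : y ∈ ball y δ := mem_ball_self hδ
  have hHd : HasDerivAt H (deriv H y) y := (hd.differentiableAt (isOpen_ball.mem_nhds hyb)).hasDerivAt
  have hsub : closedBall y (δ / 2) ⊆ ball y δ := closedBall_subset_ball (by linarith)
  have hC : ‖deriv H y‖ ≤ R / (δ / 2) := by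
    apply norm_deriv_le_of_forall_mem_sphere_norm_le (by linarith)
    · exact (hd.mono hsub).diffContOnCl_ball le_rfl
    · intro z hz
      apply gcubic_trap a b hR k
      have hz' := hsub (sphere_subset_closedBall hz)
      rw [hH z hz']
      rw [mem_ball, dist_eq_norm] at hz'
      have := norm_sub_norm_le z y
      linarith
  have hcomp : deriv (gcubic a b)^[k] x * deriv H y = 1 := by
    have hg : HasDerivAt (gcubic a b)^[k] (deriv (gcubic a b)^[k] x) (H y) := by
      rw [hc]; exact (gcubic_diff a b k x).hasDerivAt
    have e1 := hg.comp y hHd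
    have e2 : HasDerivAt ((gcubic a b)^[k] ∘ H) 1 y := by
      apply (hasDerivAt_id y).congr_of_eventuallyEq
      filter_upwards [isOpen_ball.mem_nhds hyb] with w hw
      simpa using hH w hw
    exact e1.unique e2
  have hn : ‖deriv (gcubic a b)^[k] x‖ * ‖deriv H y‖ = 1 := by rw [← norm_mul, hcomp, norm_one]
  rw [div_le_iff₀ (by positivity)]
  rw [le_div_iff₀ (by positivity)] at hC
  have h5 := norm_nonneg (deriv (gcubic a b)^[k] x)
  nlinarith

/-- The restriction of the cubic to the real line. -/
def grreal (a b : ℝ) : ℝ → ℝ := fun x => -x ^ 3 - 3 * a ^ 2 * x + b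

theorem grreal_coe (a b x : ℝ) : ((grreal a b x : ℝ) : ℂ) = gcubic a b x := by
  simp [grreal, gcubic]

theorem grreal_iter (a b : ℝ) (k : ℕ) (x : ℝ) :
    (((grreal a b)^[k] x : ℝ) : ℂ) = (gcubic a b)^[k] x := by
  induction k with
  | zero => simp
  | succ k ih => rw [Function.iterate_succ_apply', Function.iterate_succ_apply', grreal_coe, ih]

theorem grreal_anti {a : ℝ} (b : ℝ) (ha : 0 < a) : StrictAnti (grreal a b) := by
  intro x y hxy
  simp only [grreal]
  have h1 : x ^ 3 < y ^ 3 := Odd.strictMono_pow (by decide) hxy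
  have h2 : 3 * a ^ 2 * x < 3 * a ^ 2 * y := by gcongr
  linarith

theorem grreal_between {a : ℝ} (b : ℝ) (ha : 0 < a) (k : ℕ) {x u v : ℝ} (hx : x ∈ Set.uIcc u v) :
    (grreal a b)^[k] x ∈ Set.uIcc ((grreal a b)^[k] u) ((grreal a b)^[k] v) := by
  induction k with
  | zero => simpa using hx
  | succ k ih =>
    simp only [Function.iterate_succ_apply']
    have hm := (grreal_anti b ha).antitone
    rcases Set.mem_uIcc.1 ih with h | h
    · exact Set.mem_uIcc.2 (Or.inr ⟨hm h.2, hm h.1⟩)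
    · exact Set.mem_uIcc.2 (Or.inl ⟨hm h.2, hm h.1⟩)

theorem grreal_between_abs {a : ℝ} (b : ℝ) (ha : 0 < a) {M x u v : ℝ} (hx : x ∈ Set.uIcc u v)
    (hu : ∀ k, |(grreal a b)^[k] u| ≤ M) (hv : ∀ k, |(grreal a b)^[k] v| ≤ M) (k : ℕ) :
    |(grreal a b)^[k] x| ≤ M := by
  have h1 := abs_le.1 (hu k)
  have h2 := abs_le.1 (hv k)
  rw [abs_le]
  rcases Set.mem_uIcc.1 (grreal_between b ha k hx) with h | h <;> constructor <;> linarith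

theorem grreal_diff (a b : ℝ) (k : ℕ) : Differentiable ℝ (grreal a b)^[k] := by
  apply Differentiable.iterate
  unfold grreal
  fun_prop

theorem grreal_deriv (a b : ℝ) (k : ℕ) (x : ℝ) :
    ((deriv (grreal a b)^[k] x : ℝ) : ℂ) = deriv (gcubic a b)^[k] x := by
  have h1 := (grreal_diff a b k x).hasDerivAt.ofReal_comp
  have h2 := (gcubic_diff a b k x).hasDerivAt.comp_ofReal
  simp only [← grreal_iter] at h2
  exact h1.unique h2

theorem expand {a b : ℝ} (ha : 0 < a) {δ : ℝ} (hδ : 0 < δ)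
    (h1 : ∀ j, δ ≤ |((gcubic a b)^[j+1] (I * a)).im|)
    (h2 : ∀ j, δ ≤ |((gcubic a b)^[j+1] (-(I * a))).im|) (M : ℝ) :
    ∃ c : ℝ, 0 < c ∧ ∀ u v : ℝ, (∀ k, |(grreal a b)^[k] u| ≤ M) →
      (∀ k, |(grreal a b)^[k] v| ≤ M) → u < v → ∀ k,
      c * (v - u) ≤ |(grreal a b)^[k] v - (grreal a b)^[k] u| := by
  set R := max (2 + 3 * a ^ 2 + |b|) (M + δ) with hRdef
  have hR : 2 + 3 * a ^ 2 + |b| ≤ R := le_max_left _ _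
  have hR2 : M + δ ≤ R := le_max_right _ _
  have hR0 : 0 < R := by
    have := abs_nonneg b
    have := sq_nonneg a
    linarith
  refine ⟨δ / (2 * R), by positivity, fun u v hu hv huv k => ?_⟩
  obtain ⟨ξ, hξ, he⟩ := exists_deriv_eq_slope (grreal a b)^[k] huv
    (grreal_diff a b k).continuous.continuousOn (grreal_diff a b k).differentiableOn
  have hξ' : ξ ∈ Set.uIcc u v := Set.mem_uIcc.2 (Or.inl ⟨hξ.1.le, hξ.2.le⟩)
  have hb := grreal_between_abs b ha hξ' hu hv k
  have hd := deriv_lower ha hδ h1 h2 hR k (ξ : ℂ) (by rw [← grreal_iter]; simp)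
    (by rw [← grreal_iter, Complex.norm_real, Real.norm_eq_abs]; linarith)
  rw [← grreal_deriv, Complex.norm_real, Real.norm_eq_abs, he, abs_div, abs_of_pos (sub_pos.2 huv),
    le_div_iff₀ (sub_pos.2 huv)] at hd
  exact hd

theorem gcubic_conj (a b : ℝ) (k : ℕ) (z : ℂ) :
    (gcubic a b)^[k] (starRingEnd ℂ z) = starRingEnd ℂ ((gcubic a b)^[k] z) := by
  induction k with
  | zero => simp
  | succ k ih => rw [Function.iterate_succ_apply', Function.iterate_succ_apply', ih]
                 simp [gcubic]
                 exact Or.inl (Or.inl (map_ofNat (starRingEnd ℂ) 3).symm)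

theorem exists_delta {a b : ℝ} (ha : 0 < a) {n : ℕ} (hn : 1 ≤ n)
    (hper : (gcubic a b)^[n] (I * (a : ℂ)) = -(I * (a : ℂ))) :
    ∃ δ : ℝ, 0 < δ ∧ (∀ j, δ ≤ |((gcubic a b)^[j] (I * a)).im|) ∧
      (∀ j, δ ≤ |((gcubic a b)^[j] (-(I * a))).im|) := by
  have hc : (-(I * a) : ℂ) = starRingEnd ℂ (I * a) := by simp
  have hp : Function.IsPeriodicPt (gcubic a b) (2 * n) (I * a) := by
    show (gcubic a b)^[2 * n] (I * a) = I * a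
    rw [two_mul, Function.iterate_add_apply, hper, hc, gcubic_conj, hper]
    simp
  have hreal : ∀ z : ℂ, z.im = 0 → ∀ m, ((gcubic a b)^[m] z).im = 0 := by
    intro z hz m
    have : z = ((z.re : ℝ) : ℂ) := by apply Complex.ext <;> simp [hz]
    rw [this, ← grreal_iter]; simp
  have hne : ∀ j, ((gcubic a b)^[j] (I * a)).im ≠ 0 := by
    intro j hj
    have h := hreal _ hj (2 * n * j - j)
    rw [← Function.iterate_add_apply, Nat.sub_add_cancel (by nlinarith), hp.mul_const j] at h
    simp at h
    exact ha.ne' h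
  obtain ⟨m, hm, hmin⟩ := Finset.exists_min_image (Finset.range (2 * n))
    (fun j => |((gcubic a b)^[j] (I * a)).im|) ⟨0, by simp; omega⟩
  have hall : ∀ j, |((gcubic a b)^[m] (I * a)).im| ≤ |((gcubic a b)^[j] (I * a)).im| := by
    intro j
    rw [← hp.iterate_mod_apply j]
    exact hmin _ (Finset.mem_range.2 (Nat.mod_lt _ (by omega)))
  refine ⟨|((gcubic a b)^[m] (I * a)).im|, abs_pos.2 (hne m), hall, fun j => ?_⟩
  rw [hc, gcubic_conj, conj_im, abs_neg]
  exact hall j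

theorem two_cycle {a b : ℝ} (ha : 0 < a) {n : ℕ} (hn : 1 ≤ n)
    (hper : (gcubic a b)^[n] (I * (a : ℂ)) = -(I * (a : ℂ))) {u M : ℝ}
    (hu : ∀ k, |(grreal a b)^[k] u| ≤ M) : grreal a b (grreal a b u) = u := by
  obtain ⟨δ, hδ, h1, h2⟩ := exists_delta ha hn hper
  obtain ⟨c, hc, hexp⟩ := expand ha hδ (fun j => h1 (j+1)) (fun j => h2 (j+1)) M
  set G := fun x => grreal a b (grreal a b x) with hG
  have hGi : ∀ k x, G^[k] x = (grreal a b)^[2 * k] x := by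
    intro k x
    rw [Function.iterate_mul]; rfl
  have hGm : StrictMono G := (grreal_anti b ha).comp (grreal_anti b ha)
  have hGu : ∀ k, |(grreal a b)^[k] (G u)| ≤ M := fun k => hu (k + 2)
  have hbd : ∀ k, |G^[k] u| ≤ M := fun k => by rw [hGi]; exact hu _
  rcases lt_trichotomy u (G u) with h | h | h
  · exfalso
    have step : ∀ k, c * (G u - u) ≤ G^[k+1] u - G^[k] u := by
      intro k
      have h3 := hexp u (G u) hu hGu h (2 * k)
      rw [← hGi, ← hGi, abs_of_pos (sub_pos.2 (hGm.iterate k h))] at h3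
      exact h3
    have tot : ∀ k : ℕ, k * (c * (G u - u)) ≤ G^[k] u - u := by
      intro k
      induction k with
      | zero => simp
      | succ k ih => have := step k; push_cast; linarith
    obtain ⟨N, hN⟩ := exists_nat_gt (2 * M / (c * (G u - u)))
    have hp : 0 < c * (G u - u) := mul_pos hc (sub_pos.2 h)
    rw [div_lt_iff₀ hp] at hN
    have := tot N
    have := abs_le.1 (hbd N)
    have := abs_le.1 (hbd 0)
    simp only [Function.iterate_zero, id] at this
    linarith
  · exact h.symm
  · exfalso
    have step : ∀ k, c * (u - G u) ≤ G^[k] u - G^[k+1] u := by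
      intro k
      have h3 := hexp (G u) u hGu hu h (2 * k)
      rw [← hGi, ← hGi, abs_of_pos (sub_pos.2 (hGm.iterate k h))] at h3
      exact h3
    have tot : ∀ k : ℕ, k * (c * (u - G u)) ≤ u - G^[k] u := by
      intro k
      induction k with
      | zero => simp
      | succ k ih => have := step k; push_cast; linarith
    obtain ⟨N, hN⟩ := exists_nat_gt (2 * M / (c * (u - G u)))
    have hp : 0 < c * (u - G u) := mul_pos hc (sub_pos.2 h)
    rw [div_lt_iff₀ hp] at hN
    have := tot N
    have := abs_le.1 (hbd N)
    have := abs_le.1 (hbd 0)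
    simp only [Function.iterate_zero, id] at this
    linarith

theorem not_interval (a b : ℝ) {s : Set ℝ} (hs : s.Infinite)
    (h : ∀ x ∈ s, grreal a b (grreal a b x) = x) : False := by
  open Polynomial in
  let p : ℝ[X] := -X ^ 3 - C (3 * a ^ 2) * X + C b
  have hpe : ∀ x, p.eval x = grreal a b x := by intro x; simp [p, grreal]
  have h0 : p.comp p - Polynomial.X = 0 := by
    apply Polynomial.eq_zero_of_infinite_isRoot
    refine hs.mono fun x hx => ?_
    simp [Polynomial.IsRoot, hpe, h x hx]
  have hall : ∀ x, grreal a b (grreal a b x) = x := by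
    intro x
    have := congrArg (Polynomial.eval x) h0
    simp [hpe] at this
    linarith
  obtain ⟨x, hx⟩ := exists_gt (2 + 3 * a ^ 2 + |b|)
  have hx' : 2 + 3 * a ^ 2 + |b| < ‖(x : ℂ)‖ := by
    rw [Complex.norm_real, Real.norm_eq_abs]; exact hx.trans_le (le_abs_self x)
  have e1 := gcubic_escape a b le_rfl hx'
  have e2 := gcubic_escape a b le_rfl (hx'.trans e1)
  rw [← grreal_coe, ← grreal_coe, hall] at e2
  rw [← grreal_coe] at e1
  linarith

theorem real_bounded_fixed {a b : ℝ} (ha : 0 < a) {n : ℕ} (hn : 1 ≤ n)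
    (hper : (gcubic a b)^[n] (I * (a : ℂ)) = -(I * (a : ℂ))) {u M : ℝ}
    (hu : ∀ k, |(grreal a b)^[k] u| ≤ M) : grreal a b u = u := by
  by_contra hne
  refine not_interval a b (s := Set.uIcc u (grreal a b u)) ?_ ?_
  · rw [Set.uIcc]
    apply Set.Icc_infinite
    rcases lt_or_gt_of_ne hne with h | h <;> simp [h, h.not_gt, h.ne, h.ne']
  · intro x hx
    exact two_cycle ha hn hper (M := M)
      (grreal_between_abs b ha hx hu fun k => hu (k + 1))

/-- If `a₀ > 0`, `b₀ ∈ ℝ` and for some `n ≥ 1` the critical point `i a₀` of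
`g_{a₀,b₀}` satisfies `g_{a₀,b₀}^{∘n}(i a₀) = -i a₀` (so both critical points are
superattracting periodic points), then the filled Julia set of `g_{a₀,b₀}` meets
the real line exactly in the unique real fixed point `x₀`. -/
theorem filledJulia_inter_real_eq_fixed (a₀ b₀ : ℝ) (ha : 0 < a₀) (n : ℕ) (hn : 1 ≤ n)
    (hper : (gcubic a₀ b₀)^[n] (Complex.I * (a₀ : ℂ)) = -(Complex.I * (a₀ : ℂ)))
    (x₀ : ℝ) (hfix : gcubic a₀ b₀ (x₀ : ℂ) = (x₀ : ℂ)) :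
    {z : ℂ | z.im = 0 ∧
      Bornology.IsBounded (Set.range fun k => (gcubic a₀ b₀)^[k] z)} = {(x₀ : ℂ)} := by
  ext z
  simp only [Set.mem_ofPred_eq, Set.mem_singleton_iff]
  constructor
  · rintro ⟨him, hb⟩
    obtain ⟨M, hM⟩ := hb.exists_norm_le
    have hz : z = ((z.re : ℝ) : ℂ) := by apply Complex.ext <;> simp [him]
    have hu : ∀ k, |(grreal a₀ b₀)^[k] z.re| ≤ M := by
      intro k
      have := hM _ ⟨k, rfl⟩
      rw [hz] at this
      simp only [← grreal_iter, Complex.norm_real, Real.norm_eq_abs] at this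
      exact this
    have h1 := real_bounded_fixed ha hn hper hu
    have h2 : grreal a₀ b₀ x₀ = x₀ := by
      rw [← grreal_coe] at hfix; exact_mod_cast hfix
    have hanti := grreal_anti b₀ ha
    rw [hz]
    congr 1
    rcases lt_trichotomy z.re x₀ with h | h | h
    · have := hanti h; linarith
    · exact h
    · have := hanti h; linarith
  · rintro rfl
    refine ⟨by simp, ?_⟩
    have : (Set.range fun k => (gcubic a₀ b₀)^[k] (x₀ : ℂ)) ⊆ {(x₀ : ℂ)} := by
      rintro _ ⟨k, rfl⟩
      exact Function.iterate_fixed hfix k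
    exact Bornology.isBounded_singleton.subset this
end

section
/- Let g(z) = −z³ − (3/2)z (that is, g = g_{a,b} with (a,b) = (1/√2, 0)). For every real y with 0 < y < 1/√2, the sequence of even iterates g^{∘2n}(iy) converges to i/√2 as n → ∞. -/
/-- The real conjugate map `h(x) = (3/2) x - x^3`, with `g(ix) = -i h(x)`. -/
noncomputable def hmap (x : ℝ) : ℝ := (3 / 2) * x - x ^ 3

lemma even_iter_eq (y : ℝ) (n : ℕ) :
    (fun z : ℂ => -z ^ 3 - (3 / 2) * z)^[2 * n] (Complex.I * (y : ℂ))
      = Complex.I * ((hmap^[2 * n] y : ℝ) : ℂ) := by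
  induction n with
  | zero => simp
  | succ k ih =>
    rw [show 2 * (k + 1) = (2 * k + 1) + 1 by ring]
    simp only [Function.iterate_succ_apply', ih]
    generalize hmap^[2 * k] y = x
    have e : ∀ w : ℂ, (Complex.I * w) ^ 3 = - Complex.I * w ^ 3 := by
      intro w
      rw [mul_pow, Complex.I_pow_three]
    have e1 : -(Complex.I * (x : ℂ)) ^ 3 - 3 / 2 * (Complex.I * (x : ℂ))
        = Complex.I * ((-(hmap x) : ℝ) : ℂ) := by
      rw [e]; simp only [hmap]; push_cast; ring
    rw [e1, e]
    generalize hmap x = u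
    simp only [hmap]; push_cast; ring

lemma hmap_bounds (s y : ℝ) (hs : s ^ 2 = 1 / 2) (hs0 : 0 < s) (h0 : 0 < y) (h1 : y < s) (n : ℕ) :
    y ≤ hmap^[n] y ∧ hmap^[n] y ≤ s ∧ s - hmap^[n] y ≤ s * (1 - s * y) ^ n := by
  have hr : 0 ≤ 1 - s * y := by nlinarith
  induction n with
  | zero => simp; exact ⟨h1.le, h0.le⟩
  | succ k ih =>
    rw [Function.iterate_succ_apply']
    generalize hmap^[k] y = x at *
    obtain ⟨a, b, c⟩ := ih
    have key : s - hmap x = (s - x) * (1 - s * x - x ^ 2) := by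
      simp only [hmap]; linear_combination x * hs
    have key2 : 1 - s * x - x ^ 2 = (s - x) * (x + 2 * s) := by
      linear_combination (-2) * hs
    have p : 0 ≤ 1 - s * x - x ^ 2 := by
      rw [key2]; exact mul_nonneg (by linarith) (by linarith)
    have q : 1 - s * x - x ^ 2 ≤ 1 - s * y := by nlinarith
    refine ⟨?_, ?_, ?_⟩
    · nlinarith [mul_le_mul_of_nonneg_left (show 1 - s * x - x ^ 2 ≤ 1 by nlinarith) (sub_nonneg.2 b)]
    · nlinarith [mul_nonneg (sub_nonneg.2 b) p]
    · rw [key, pow_succ (1 - s * y), ← mul_assoc]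
      exact mul_le_mul c q p (by positivity)

/-- For the cubic `g(z) = -z^3 - (3/2) z` (the center of the bitransitive
component, `(a,b) = (1/√2, 0)`), for every real `0 < y < 1/√2` the even iterates
`g^{∘2n}(iy)` converge to `i/√2`. -/
theorem even_iterates_converge (y : ℝ) (h0 : 0 < y) (h1 : y < 1 / Real.sqrt 2) :
    Filter.Tendsto
      (fun n => (fun z : ℂ => -z ^ 3 - (3 / 2) * z)^[2 * n] (Complex.I * (y : ℂ)))
      Filter.atTop (nhds (Complex.I / (Real.sqrt 2 : ℂ))) := by
  have hs : (1 / Real.sqrt 2) ^ 2 = 1 / 2 := by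
    rw [div_pow, Real.sq_sqrt (by norm_num)]; norm_num
  have hs0 : 0 < 1 / Real.sqrt 2 := by positivity
  have hlim : Complex.I / (Real.sqrt 2 : ℂ) = Complex.I * ((1 / Real.sqrt 2 : ℝ) : ℂ) := by
    push_cast; ring
  rw [hlim]
  simp only [even_iter_eq]
  generalize 1 / Real.sqrt 2 = s at *
  have B := hmap_bounds s y hs hs0 h0 h1
  have T : Filter.Tendsto (fun n => hmap^[n] y) Filter.atTop (nhds s) := by
    have G : Filter.Tendsto (fun n : ℕ => s - s * (1 - s * y) ^ n) Filter.atTop (nhds s) := by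
      have := (tendsto_pow_atTop_nhds_zero_of_lt_one (r := 1 - s * y)
        (by nlinarith) (by nlinarith [mul_pos hs0 h0])).const_mul s
      simpa using this.const_sub s
    exact tendsto_of_tendsto_of_tendsto_of_le_of_le G tendsto_const_nhds
      (fun n => by have := (B n).2.2; simp only; linarith) (fun n => (B n).2.1)
  have T2 : Filter.Tendsto (fun n : ℕ => hmap^[2 * n] y) Filter.atTop (nhds s) :=
    T.comp (Filter.tendsto_id.const_mul_atTop' (by norm_num))
  exact ((Complex.continuous_ofReal.tendsto s).comp T2).const_mul Complex.I
end

section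
/- Let h : ℝ → ℝ be differentiable, and let p < q be real numbers with h(p) = p, h(q) = q, h'(p) > 1, h'(q) > 1, and h'(t) ≥ 0 for all t ∈ [p, q]. Then there exists x ∈ (p, q) with h(x) = x and |h'(x)| ≤ 1; that is, between two repelling fixed points of an order-preserving interval map there is a non-repelling fixed point. -/
open Filter Topology in
lemma slope_aux (h : ℝ → ℝ) (hdiff : Differentiable ℝ h) (x : ℝ) (hx : h x = x)
    (hx' : 1 < deriv h x) :
    ∀ᶠ t in 𝓝[≠] x, 0 < (t - x) * (h t - t) := by
  have h1 := hasDerivAt_iff_tendsto_slope.1 (hdiff x).hasDerivAt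
  filter_upwards [h1.eventually (lt_mem_nhds hx'), self_mem_nhdsWithin] with t ht hne
  have hne' : t - x ≠ 0 := sub_ne_zero.2 hne
  rw [slope_def_field, hx] at ht
  have h2 : 0 < (t - x) ^ 2 := by positivity
  have h3 : (t - x) * (h t - t) = (t - x) ^ 2 * ((h t - x) / (t - x) - 1) := by
    field_simp
    ring
  rw [h3]
  exact mul_pos h2 (by linarith)

open Filter Topology in
lemma left_aux (h : ℝ → ℝ) (hdiff : Differentiable ℝ h) (x : ℝ) (hx : h x = x)
    (hx' : 1 < deriv h x) (a : ℝ) (ha : a < x) : ∃ t ∈ Set.Ioo a x, h t < t := by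
  have h1 : ∀ᶠ t in 𝓝[<] x, 0 < (t - x) * (h t - t) :=
    (slope_aux h hdiff x hx hx').filter_mono (nhdsWithin_mono _ fun t ht => ne_of_lt ht)
  obtain ⟨t, ht, hm⟩ := (h1.and (Ioo_mem_nhdsLT ha)).exists
  exact ⟨t, hm, by nlinarith [hm.2]⟩

open Filter Topology in
lemma right_aux (h : ℝ → ℝ) (hdiff : Differentiable ℝ h) (x : ℝ) (hx : h x = x)
    (hx' : 1 < deriv h x) (a : ℝ) (ha : x < a) : ∃ t ∈ Set.Ioo x a, t < h t := by
  have h1 : ∀ᶠ t in 𝓝[>] x, 0 < (t - x) * (h t - t) :=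
    (slope_aux h hdiff x hx hx').filter_mono (nhdsWithin_mono _ fun t ht => ne_of_gt ht)
  obtain ⟨t, ht, hm⟩ := (h1.and (Ioo_mem_nhdsGT ha)).exists
  exact ⟨t, hm, by nlinarith [hm.1]⟩

/-- Between two repelling fixed points of an order-preserving differentiable
interval map there is a non-repelling fixed point: if `h : ℝ → ℝ` is
differentiable, `p < q` are fixed points with `h'(p) > 1`, `h'(q) > 1`, and
`h' ≥ 0` on `[p,q]`, then there is `x ∈ (p,q)` with `h(x) = x` and `|h'(x)| ≤ 1`. -/
theorem nonrepelling_fixed_point_between (h : ℝ → ℝ) (hdiff : Differentiable ℝ h)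
    (p q : ℝ) (hpq : p < q) (hp : h p = p) (hq : h q = q)
    (hp' : 1 < deriv h p) (hq' : 1 < deriv h q)
    (hmono : ∀ t ∈ Set.Icc p q, 0 ≤ deriv h t) :
    ∃ x ∈ Set.Ioo p q, h x = x ∧ |deriv h x| ≤ 1 := by
  obtain ⟨a, ⟨hpa, haq⟩, ha⟩ := right_aux h hdiff p hp hp' q hpq
  obtain ⟨b, ⟨hab, hbq⟩, hb⟩ := left_aux h hdiff q hq hq' a haq
  have hc := hdiff.continuous
  have hS : IsCompact (Set.Icc a b ∩ {t | h t ≤ t}) :=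
    isCompact_Icc.inter_right (isClosed_le hc continuous_id)
  obtain ⟨x, ⟨⟨hax, hxb⟩, hxx⟩, hmin⟩ := hS.exists_isLeast ⟨b, ⟨hab.le, le_rfl⟩, hb.le⟩
  have hxx' : h x ≤ x := hxx
  have hax' : a < x := lt_of_le_of_ne hax (by rintro rfl; linarith)
  have hfix : h x = x := by
    have hiv := intermediate_value_Icc' hax
      (f := fun t => h t - t) (hc.sub continuous_id).continuousOn
    obtain ⟨c, hcm, hc0⟩ := hiv (show (0 : ℝ) ∈ _ from ⟨by linarith, by linarith⟩)
    have hc0' : h c - c = 0 := hc0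
    have hxc : x ≤ c := hmin ⟨⟨hcm.1, hcm.2.trans hxb⟩, show h c ≤ c by linarith⟩
    have : c = x := le_antisymm hcm.2 hxc
    subst this
    linarith
  refine ⟨x, ⟨by linarith, by linarith⟩, hfix, ?_⟩
  rw [abs_of_nonneg (hmono x ⟨by linarith, by linarith⟩)]
  by_contra! hgt
  obtain ⟨t, ⟨hat, htx⟩, ht⟩ := left_aux h hdiff x hfix hgt a hax'
  have : x ≤ t := hmin ⟨⟨hat.le, by linarith⟩, ht.le⟩
  linarith
end

section
/- Let d₁, d₂ ≥ 2 be integers and c₁, c₂ ∈ ℂ, and suppose that for i = 1, 2 the polynomial p_{c_i}(z) = z^{d_i} + c_i has a parabolic fixed point z_i with multiplier one, i.e. p_{c_i}(z_i) = z_i and p_{c_i}'(z_i) = 1. If the germs of p_{c₁} at z₁ and of p_{c₂} at z₂ are conformally conjugate — i.e. there exist open neighborhoods N₁ of z₁ and N₂ of z₂ and an injective holomorphic map φ : N₁ → ℂ with φ(N₁) = N₂, φ(z₁) = z₂, and φ(p_{c₁}(z)) = p_{c₂}(φ(z)) for all z ∈ N₁ with p_{c₁}(z) ∈ N₁ — then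 d₁ = d₂, and there exists λ ∈ ℂ with λ^{d₁−1} = 1 and c₂ = λc₁, so that p_{c₁} and p_{c₂} are affinely conjugate. -/
open Polynomial Topology Filter

lemma eq_deriv_on {U : Set ℂ} (hU : IsOpen U) {F G F' G' : ℂ → ℂ}
    (h : ∀ z ∈ U, F z = G z) (hF : ∀ z ∈ U, HasDerivAt F (F' z) z)
    (hG : ∀ z ∈ U, HasDerivAt G (G' z) z) : ∀ z ∈ U, F' z = G' z := by
  intro z hz
  have h1 : F =ᶠ[𝓝 z] G := by
    filter_upwards [hU.mem_nhds hz] with w hw using h w hw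
  exact (hF z hz).unique ((hG z hz).congr_of_eventuallyEq h1)

lemma key_germ (P Q : ℂ[X]) (z₁ z₂ : ℂ) (hP0 : P.eval z₁ = z₁)
    (hP1 : P.derivative.eval z₁ = 1) (hP2 : P.derivative.derivative.eval z₁ ≠ 0)
    (hQ1 : Q.derivative.eval z₂ = 1)
    (N : Set ℂ) (φ : ℂ → ℂ) (hN : IsOpen N) (hz : z₁ ∈ N) (hφ : DifferentiableOn ℂ φ N)
    (hinj : Set.InjOn φ N) (hφz : φ z₁ = z₂)
    (hc : ∀ z ∈ N, P.eval z ∈ N → φ (P.eval z) = Q.eval (φ z)) :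
    ∃ t : ℂ, t ≠ 0 ∧ P.derivative.derivative.eval z₁ = Q.derivative.derivative.eval z₂ * t ∧
      P.derivative.derivative.derivative.eval z₁
        = Q.derivative.derivative.derivative.eval z₂ * t ^ 2 := by
  set U : Set ℂ := N ∩ (fun z => P.eval z) ⁻¹' N with hUdef
  have hU : IsOpen U := hN.inter (hN.preimage P.continuous)
  have hzU : z₁ ∈ U := ⟨hz, by simpa [hP0] using hz⟩
  have hφ1 := hφ.deriv hN
  have hφ2 := hφ1.deriv hN
  have D0 : ∀ z ∈ N, HasDerivAt φ (deriv φ z) z := fun z h =>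
    (hφ.differentiableAt (hN.mem_nhds h)).hasDerivAt
  have D1 : ∀ z ∈ N, HasDerivAt (deriv φ) (deriv (deriv φ) z) z := fun z h =>
    (hφ1.differentiableAt (hN.mem_nhds h)).hasDerivAt
  have D2 : ∀ z ∈ N, HasDerivAt (deriv (deriv φ)) (deriv (deriv (deriv φ)) z) z := fun z h =>
    (hφ2.differentiableAt (hN.mem_nhds h)).hasDerivAt
  have E0 : ∀ z ∈ U, φ (P.eval z) = Q.eval (φ z) := fun z h => hc z h.1 h.2
  have E1 := eq_deriv_on hU E0 (fun z h => (D0 _ h.2).comp z (P.hasDerivAt z))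
    (fun z h => (Q.hasDerivAt _).comp z (D0 z h.1))
  have E2 := eq_deriv_on hU E1
    (fun z h => ((D1 _ h.2).comp z (P.hasDerivAt z)).mul (P.derivative.hasDerivAt z))
    (fun z h => ((Q.derivative.hasDerivAt _).comp z (D0 z h.1)).mul (D1 z h.1))
  have E3 := eq_deriv_on hU E2
    (fun z h => ((((D2 _ h.2).comp z (P.hasDerivAt z)).mul (P.derivative.hasDerivAt z)).mul
      (P.derivative.hasDerivAt z)).add
      (((D1 _ h.2).comp z (P.hasDerivAt z)).mul (P.derivative.derivative.hasDerivAt z)))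
    (fun z h => ((((Q.derivative.derivative.hasDerivAt _).comp z (D0 z h.1)).mul
      (D1 z h.1)).mul (D1 z h.1)).add
      (((Q.derivative.hasDerivAt _).comp z (D0 z h.1)).mul (D2 z h.1)))
  have e2 := E2 z₁ hzU
  have e3 := E3 z₁ hzU
  simp only [Function.comp, Pi.mul_apply, hP0, hP1, hφz, hQ1] at e2 e3
  have hne : deriv φ z₁ ≠ 0 := by
    intro h0
    have hnot : ¬ ∀ᶠ z in 𝓝 z₁, deriv φ z = 0 := by
      intro hev
      obtain ⟨r, hr, hb⟩ := Metric.eventually_nhds_iff_ball.1 (hev.and (hN.mem_nhds hz))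
      have hm1 : z₁ ∈ Metric.ball z₁ r := Metric.mem_ball_self hr
      have hm2 : z₁ + (r / 2 : ℝ) ∈ Metric.ball z₁ r := by
        rw [Metric.mem_ball, dist_eq_norm, add_sub_cancel_left, Complex.norm_real,
          Real.norm_eq_abs, abs_of_pos (by positivity)]
        linarith
      have hconst := Metric.isOpen_ball.is_const_of_deriv_eq_zero
        (s := Metric.ball z₁ r) (f := φ) (𝕜 := ℂ)
        (convex_ball z₁ r).isPreconnected
        (fun w hw => (D0 w (hb w hw).2).differentiableAt.differentiableWithinAt)
        (fun w hw => (hb w hw).1) hm1 hm2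
      have := hinj (hb _ hm1).2 (hb _ hm2).2 hconst
      have h3 : ((r / 2 : ℝ) : ℂ) = 0 := by linear_combination -this
      have h4 : r / 2 = 0 := by exact_mod_cast h3
      linarith
    have han : AnalyticAt ℂ (deriv φ) z₁ := hφ1.analyticAt (hN.mem_nhds hz)
    obtain ⟨n, h, hh, hh0, heq⟩ := han.exists_eventuallyEq_pow_smul_nonzero_iff.2 hnot
    obtain ⟨q, hq⟩ : (X - C z₁) ∣ P - C z₁ := by
      rw [dvd_iff_isRoot]; simp [hP0]
    have hPq : P = C z₁ + (X - C z₁) * q := by rw [← hq]; ring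
    have hq0 : q.eval z₁ = 1 := by
      rw [hPq] at hP1; simpa using hP1
    have hq1 : P.derivative.derivative.eval z₁ = 2 * q.derivative.eval z₁ := by
      rw [hPq]; simp; ring
    have hPt : Tendsto (fun z => P.eval z) (𝓝 z₁) (𝓝 z₁) := by
      simpa [hP0] using P.continuous.tendsto z₁
    have hH := hh.differentiableAt.hasDerivAt
    have hH' : HasDerivAt h (deriv h z₁) (P.eval z₁) := by rwa [hP0]
    have L := (((q.hasDerivAt z₁).pow n).mul (hH'.comp z₁ (P.hasDerivAt z₁))).mul
      (P.derivative.hasDerivAt z₁)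
    have R := ((Q.derivative.hasDerivAt _).comp z₁ (D0 z₁ hz)).mul hH
    have hLR : ((fun z => q.eval z) ^ n * (h ∘ fun z => P.eval z) *
        (fun z => P.derivative.eval z)) =ᶠ[𝓝 z₁]
        ((fun z => Q.derivative.eval z) ∘ φ) * h := by
      have hpt : eval z₁ q ^ n * h (eval z₁ P) * eval z₁ (derivative P)
          = eval (φ z₁) (derivative Q) * h z₁ := by
        rw [hq0, hP0, hP1, hφz, hQ1]; simp
      filter_upwards [hU.mem_nhds hzU, heq, hPt.eventually heq] with z hz1 hz2 hz3
      have hz4 := E1 z hz1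
      simp only [Function.comp, Pi.mul_apply, Pi.pow_apply, smul_eq_mul] at *
      by_cases hzz : z = z₁
      · subst hzz; exact hpt
      · rw [hz3, hz2] at hz4
        have h5 : eval z P - z₁ = (z - z₁) * eval z q := by
          conv_lhs => rw [hPq]
          simp
        rw [h5, mul_pow] at hz4
        have h6 : (z - z₁) ^ n ≠ 0 := pow_ne_zero _ (sub_ne_zero.2 hzz)
        apply mul_left_cancel₀ h6
        linear_combination hz4
    have hu := L.unique (R.congr_of_eventuallyEq hLR)
    simp only [Function.comp, Pi.mul_apply, Pi.pow_apply, hP0, hP1, hφz, hQ1, hq0, h0, hq1,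
      one_pow] at hu
    have hqn : q.derivative.eval z₁ ≠ 0 := by
      intro h7; apply hP2; rw [hq1, h7, mul_zero]
    have h8 : ((n : ℂ) + 2) * (q.derivative.eval z₁ * h z₁) = 0 := by
      linear_combination hu
    have h9 : ((n : ℂ) + 2) ≠ 0 := by exact_mod_cast (by omega : n + 2 ≠ 0)
    exact mul_ne_zero h9 (mul_ne_zero hqn hh0) h8
  have e2' : P.derivative.derivative.eval z₁ = Q.derivative.derivative.eval z₂ * deriv φ z₁ := by
    apply mul_left_cancel₀ hne
    linear_combination e2
  refine ⟨deriv φ z₁, hne, e2', ?_⟩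
  apply mul_left_cancel₀ hne
  rw [e2'] at e3
  linear_combination e3

lemma param_facts (d : ℕ) (hd : 2 ≤ d) (c z : ℂ) (hfix : z ^ d + c = z)
    (hmult : deriv (fun z : ℂ => z ^ d + c) z = 1) :
    z ≠ 0 ∧ (d : ℂ) * z ^ (d - 1) = 1 ∧ d * c = (d - 1) * z ∧
    (X ^ d + C c : ℂ[X]).derivative.eval z = 1 ∧
    (X ^ d + C c : ℂ[X]).derivative.derivative.eval z * z = d - 1 ∧
    (X ^ d + C c : ℂ[X]).derivative.derivative.derivative.eval z * z ^ 2 = (d - 1) * (d - 2) := by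
  have h1 : (d : ℂ) * z ^ (d - 1) = 1 := by simpa using hmult
  obtain ⟨k, rfl⟩ : ∃ k, d = k + 2 := ⟨d - 2, by omega⟩
  simp only [show k + 2 - 1 = k + 1 by omega] at h1 ⊢
  have hz : z ≠ 0 := by
    rintro rfl; simp at h1
  refine ⟨hz, h1, ?_, ?_, ?_, ?_⟩
  · push_cast at *
    linear_combination (k + 2) * hfix - z * h1
  · push_cast at h1
    simp
    linear_combination h1
  · push_cast at h1
    simp
    linear_combination (k + 1) * h1
  · push_cast at h1
    rcases k with _ | k
    · simp
    · push_cast at h1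
      simp
      linear_combination (k + 2) * (k + 1) * h1

/-- Parabolic germs determine unicritical polynomials (multiplier-one fixed point
case): if `p_{c_i}(z) = z^{d_i} + c_i` (with `d_i ≥ 2`) has a fixed point `z_i` of
multiplier one, and the germs of `p_{c₁}` at `z₁` and `p_{c₂}` at `z₂` are
conformally conjugate, then `d₁ = d₂` and `p_{c₁}`, `p_{c₂}` are affinely
conjugate, i.e. `c₂ = λ c₁` for some `(d₁-1)`-st root of unity `λ`. -/
theorem parabolic_germ_determines_unicritical (d₁ d₂ : ℕ) (hd₁ : 2 ≤ d₁) (hd₂ : 2 ≤ d₂)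
    (c₁ c₂ z₁ z₂ : ℂ)
    (hfix₁ : z₁ ^ d₁ + c₁ = z₁) (hfix₂ : z₂ ^ d₂ + c₂ = z₂)
    (hmult₁ : deriv (fun z : ℂ => z ^ d₁ + c₁) z₁ = 1)
    (hmult₂ : deriv (fun z : ℂ => z ^ d₂ + c₂) z₂ = 1)
    (hconj : ∃ (N₁ N₂ : Set ℂ) (φ : ℂ → ℂ),
      IsOpen N₁ ∧ IsOpen N₂ ∧ z₁ ∈ N₁ ∧ z₂ ∈ N₂ ∧
      DifferentiableOn ℂ φ N₁ ∧ Set.InjOn φ N₁ ∧ φ '' N₁ = N₂ ∧ φ z₁ = z₂ ∧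
      ∀ z ∈ N₁, (z ^ d₁ + c₁) ∈ N₁ → φ (z ^ d₁ + c₁) = (φ z) ^ d₂ + c₂) :
    d₁ = d₂ ∧ ∃ lam : ℂ, lam ^ (d₁ - 1) = 1 ∧ c₂ = lam * c₁ := by
  obtain ⟨N₁, N₂, φ, hN₁, -, hz₁, -, hφ, hinj, -, hφz, hc⟩ := hconj
  obtain ⟨n1, a1, b1, p1, q1, r1⟩ := param_facts d₁ hd₁ c₁ z₁ hfix₁ hmult₁
  obtain ⟨n2, a2, b2, p2, q2, r2⟩ := param_facts d₂ hd₂ c₂ z₂ hfix₂ hmult₂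
  have k1 : (d₁ : ℂ) - 1 ≠ 0 := by
    rw [sub_ne_zero]; exact_mod_cast (by omega : d₁ ≠ 1)
  have k2 : (d₂ : ℂ) - 1 ≠ 0 := by
    rw [sub_ne_zero]; exact_mod_cast (by omega : d₂ ≠ 1)
  have k3 : (d₁ : ℂ) ≠ 0 := by exact_mod_cast (by omega : d₁ ≠ 0)
  obtain ⟨t, ht, u1, u2⟩ := key_germ (X ^ d₁ + C c₁) (X ^ d₂ + C c₂) z₁ z₂ (by simpa using hfix₁)
    p1 (by intro h; rw [h, zero_mul] at q1; exact k1 q1.symm) p2 N₁ φ hN₁ hz₁ hφ hinj hφz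
    (by simpa using hc)
  have v1 : ((d₁ : ℂ) - 1) * z₂ = (d₂ - 1) * (t * z₁) := by
    rw [← q1, ← q2, u1]; ring
  have v2 : ((d₁ : ℂ) - 1) * (d₁ - 2) * z₂ ^ 2 = (d₂ - 1) * (d₂ - 2) * (t * z₁) ^ 2 := by
    rw [← r1, ← r2, u2]; ring
  have v3 : ((d₁ : ℂ) - 1) * z₂ ^ 2 * ((d₁ - 2) * (d₂ - 1)) =
      ((d₁ : ℂ) - 1) * z₂ ^ 2 * ((d₂ - 2) * (d₁ - 1)) := by
    linear_combination (d₂ - 1) * v2 - (d₂ - 2) * (((d₁ : ℂ) - 1) * z₂ + (d₂ - 1) * (t * z₁)) * v1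
  have v4 := mul_left_cancel₀ (mul_ne_zero k1 (pow_ne_zero 2 n2)) v3
  have v5 : (d₁ : ℂ) = d₂ := by linear_combination v4
  have v6 : d₁ = d₂ := by exact_mod_cast v5
  subst v6
  refine ⟨rfl, z₂ / z₁, ?_, ?_⟩
  · rw [div_pow, div_eq_one_iff_eq (pow_ne_zero _ n1)]
    apply mul_left_cancel₀ k3
    rw [a1, a2]
  · apply mul_left_cancel₀ k3
    rw [b2, mul_left_comm, b1]
    field_simp
end

section
/- Let d ≥ 2 be an integer, c ∈ ℂ, and ω = exp(2πi/(d−1)). The polynomial p_c(z) = z^d + c commutes with some invertible anti-holomorphic affine map of the plane (a map of the form τ(z) = μz̄ + ν with μ ≠ 0) if and only if c̄ = ω^j c for some integer j; moreover any such commuting map τ necessarily has ν = 0 and μ^{d−1} = 1, and is automatically an anti-holomorphic involution (τ∘τ = id). -/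
/-- Any commuting map has `ν = 0`, `μ^(d-1) = 1` and `μ c̄ = c`. -/
theorem commuting_aux (d : ℕ) (hd : 2 ≤ d) (c μ ν : ℂ) (hμ : μ ≠ 0)
    (h : ∀ z : ℂ, μ * starRingEnd ℂ (z ^ d + c) + ν = (μ * starRingEnd ℂ z + ν) ^ d + c) :
    ν = 0 ∧ μ ^ (d - 1) = 1 ∧ μ * starRingEnd ℂ c = c := by
  have h1 : ∀ w : ℂ, μ * (w ^ d + starRingEnd ℂ c) + ν = (μ * w + ν) ^ d + c := by
    intro w
    have := h (starRingEnd ℂ w)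
    simpa using this
  have hd0 : (d : ℂ) ≠ 0 := by
    exact_mod_cast (by omega : d ≠ 0)
  have h2 : ∀ w : ℂ, w ^ (d - 1) = (μ * w + ν) ^ (d - 1) := by
    intro w
    have e1 : HasDerivAt (fun w : ℂ => μ * (w ^ d + starRingEnd ℂ c) + ν)
        (μ * (d * w ^ (d - 1))) w :=
      (((hasDerivAt_pow d w).add_const _).const_mul μ).add_const _
    have e2 : HasDerivAt (fun w : ℂ => (μ * w + ν) ^ d + c)
        (d * (μ * w + ν) ^ (d - 1) * (μ * 1)) w :=
      ((((hasDerivAt_id w).const_mul μ).add_const ν).pow d).add_const c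
    rw [← funext h1] at e2
    have e3 := e1.unique e2
    have e4 : (μ * d) * w ^ (d - 1) = (μ * d) * (μ * w + ν) ^ (d - 1) := by
      linear_combination e3
    exact mul_left_cancel₀ (mul_ne_zero hμ hd0) e4
  have hν : ν = 0 := by
    have := h2 0
    rw [zero_pow (by omega), mul_zero, zero_add] at this
    exact pow_eq_zero_iff (by omega) |>.mp this.symm
  subst hν
  refine ⟨rfl, ?_, ?_⟩
  · simpa using (h2 1).symm
  · have := h1 0
    have hdn : d ≠ 0 := by omega
    simpa [hdn] using this

/-- With `ω = exp(2πi/(d-1))`, the polynomial `p_c(z) = z^d + c` (`d ≥ 2`) commutes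
with some invertible anti-holomorphic affine map `τ(z) = μ z̄ + ν` (`μ ≠ 0`) if and
only if `c̄ = ω^j c` for some integer `j`; moreover any such commuting `τ` has
`ν = 0`, `μ^(d-1) = 1`, and is an anti-holomorphic involution (`τ ∘ τ = id`). -/
theorem unicritical_commutes_with_antiholomorphic (d : ℕ) (hd : 2 ≤ d) (c : ℂ) :
    ((∃ μ ν : ℂ, μ ≠ 0 ∧
        ∀ z : ℂ, μ * starRingEnd ℂ (z ^ d + c) + ν = (μ * starRingEnd ℂ z + ν) ^ d + c) ↔
      ∃ j : ℤ, starRingEnd ℂ c =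
        Complex.exp (2 * Real.pi * Complex.I / ((d : ℂ) - 1)) ^ j * c) ∧
    ∀ μ ν : ℂ, μ ≠ 0 →
      (∀ z : ℂ, μ * starRingEnd ℂ (z ^ d + c) + ν = (μ * starRingEnd ℂ z + ν) ^ d + c) →
      ν = 0 ∧ μ ^ (d - 1) = 1 ∧
        ∀ z : ℂ, μ * starRingEnd ℂ (μ * starRingEnd ℂ z + ν) + ν = z := by
  have hn : d - 1 ≠ 0 := by omega
  have hprim : IsPrimitiveRoot
      (Complex.exp (2 * Real.pi * Complex.I / ((d : ℂ) - 1))) (d - 1) := by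
    have := Complex.isPrimitiveRoot_exp (d - 1) hn
    rwa [Nat.cast_sub (by omega), Nat.cast_one] at this
  generalize Complex.exp (2 * Real.pi * Complex.I / ((d : ℂ) - 1)) = ω at hprim
  have hω : ω ≠ 0 := hprim.ne_zero hn
  refine ⟨⟨?_, ?_⟩, ?_⟩
  · rintro ⟨μ, ν, hμ, h⟩
    obtain ⟨-, h1, h2⟩ := commuting_aux d hd c μ ν hμ h
    haveI : NeZero (d - 1) := ⟨hn⟩
    obtain ⟨k, -, rfl⟩ := hprim.eq_pow_of_pow_eq_one h1
    refine ⟨-(k : ℤ), ?_⟩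
    rw [zpow_neg, zpow_natCast, eq_inv_mul_iff_mul_eq₀ hμ]
    exact h2
  · rintro ⟨j, hj⟩
    have hm : (ω ^ (-j)) ^ (d - 1) = 1 := by
      rw [← zpow_natCast, ← zpow_mul, mul_comm, zpow_mul, zpow_natCast, hprim.pow_eq_one,
        one_zpow]
    have hmd : (ω ^ (-j)) ^ d = ω ^ (-j) := by
      conv_lhs => rw [show d = (d - 1) + 1 by omega, pow_succ, hm, one_mul]
    refine ⟨ω ^ (-j), 0, zpow_ne_zero _ hω, fun z => ?_⟩
    have hc : ω ^ (-j) * starRingEnd ℂ c = c := by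
      rw [hj, ← mul_assoc, ← zpow_add₀ hω]
      simp
    rw [map_add, map_pow, add_zero, add_zero, mul_pow, hmd, mul_add, hc]
  · intro μ ν hμ h
    obtain ⟨h0, h1, -⟩ := commuting_aux d hd c μ ν hμ h
    refine ⟨h0, h1, fun z => ?_⟩
    have hnorm : ‖μ‖ = 1 := Complex.norm_eq_one_of_pow_eq_one h1 hn
    have hmm : μ * starRingEnd ℂ μ = 1 := by
      rw [Complex.mul_conj, Complex.normSq_eq_norm_sq, hnorm]
      simp
    rw [h0, add_zero, add_zero, map_mul, Complex.conj_conj, ← mul_assoc, hmm, one_mul]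
end

section
/- Let d ≥ 2 be an integer, c ∈ ℂ, and ω = exp(2πi/(d+1)). The anti-polynomial f_c(z) = z̄^d + c commutes with some invertible anti-holomorphic affine map of the plane (a map of the form τ(z) = μz̄ + ν with μ ≠ 0) if and only if c̄ = ω^j c for some integer j; moreover any such commuting map τ necessarily has ν = 0 and μ^{d+1} = 1, and is automatically an anti-holomorphic involution (τ∘τ = id). -/
theorem anti_key (d : ℕ) (hd : 2 ≤ d) (c : ℂ) : ∀ μ ν : ℂ, μ ≠ 0 →
      (∀ z : ℂ, μ * starRingEnd ℂ ((starRingEnd ℂ z) ^ d + c) + ν =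
        (starRingEnd ℂ (μ * starRingEnd ℂ z + ν)) ^ d + c) →
      ν = 0 ∧ μ ^ (d + 1) = 1 ∧ μ * starRingEnd ℂ μ = 1 ∧ μ * starRingEnd ℂ c = c := by
  intro μ ν hμ h
  simp only [map_add, map_mul, map_pow, Complex.conj_conj] at h
  have hd0 : (d : ℂ) ≠ 0 := by exact_mod_cast (by omega : d ≠ 0)
  have hd1 : d - 1 ≠ 0 := by omega
  have hm : starRingEnd ℂ μ ≠ 0 := by simpa using hμ
  have hν : ν = 0 := by
    have e1 := ((((hasDerivAt_id (0 : ℂ)).pow d).add_const (starRingEnd ℂ c)).const_mul μ).add_const ν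
    have e2 := ((((hasDerivAt_id (0 : ℂ)).const_mul (starRingEnd ℂ μ)).add_const
      (starRingEnd ℂ ν)).pow d).add_const c
    have e3 := e1.unique (e2.congr_of_eventuallyEq (Filter.Eventually.of_forall fun z => by
      simpa using h z))
    simp [hd1, hd0, hm] at e3
    simpa using e3
  subst hν
  have h0 := h 0
  have h1 := h 1
  have hdz : d ≠ 0 := by omega
  simp [hdz] at h0 h1
  have hmu : μ = starRingEnd ℂ μ ^ d := by linear_combination h1 - h0
  have hnorm : ‖μ‖ = ‖μ‖ ^ d := by
    have := congrArg norm hmu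
    simpa using this
  have hn1 : ‖μ‖ = 1 := by
    have hp : ‖μ‖ ^ (d - 1) = 1 := by
      have hpos : ‖μ‖ ≠ 0 := by simpa using hμ
      apply mul_right_cancel₀ hpos
      rw [← pow_succ, Nat.sub_add_cancel (by omega), ← hnorm, one_mul]
    exact (pow_eq_one_iff_of_nonneg (norm_nonneg _) hd1).1 hp
  have hc : μ * starRingEnd ℂ μ = 1 := by
    rw [Complex.mul_conj, Complex.normSq_eq_norm_sq, hn1]; simp
  refine ⟨rfl, ?_, hc, h0⟩
  calc μ ^ (d + 1) = μ ^ d * μ := pow_succ _ _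
    _ = μ ^ d * starRingEnd ℂ μ ^ d := by rw [← hmu]
    _ = 1 := by rw [← mul_pow, hc, one_pow]

/-- With `ω = exp(2πi/(d+1))`, the anti-polynomial `f_c(z) = z̄^d + c` (`d ≥ 2`)
commutes with some invertible anti-holomorphic affine map `τ(z) = μ z̄ + ν`
(`μ ≠ 0`) if and only if `c̄ = ω^j c` for some integer `j`; moreover any such
commuting `τ` has `ν = 0`, `μ^(d+1) = 1`, and is an anti-holomorphic involution
(`τ ∘ τ = id`). -/
theorem antipolynomial_commutes_with_antiholomorphic (d : ℕ) (hd : 2 ≤ d) (c : ℂ) :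
    ((∃ μ ν : ℂ, μ ≠ 0 ∧
        ∀ z : ℂ, μ * starRingEnd ℂ ((starRingEnd ℂ z) ^ d + c) + ν =
          (starRingEnd ℂ (μ * starRingEnd ℂ z + ν)) ^ d + c) ↔
      ∃ j : ℤ, starRingEnd ℂ c =
        Complex.exp (2 * Real.pi * Complex.I / ((d : ℂ) + 1)) ^ j * c) ∧
    ∀ μ ν : ℂ, μ ≠ 0 →
      (∀ z : ℂ, μ * starRingEnd ℂ ((starRingEnd ℂ z) ^ d + c) + ν =
        (starRingEnd ℂ (μ * starRingEnd ℂ z + ν)) ^ d + c) →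
      ν = 0 ∧ μ ^ (d + 1) = 1 ∧
        ∀ z : ℂ, μ * starRingEnd ℂ (μ * starRingEnd ℂ z + ν) + ν = z := by
  have key : ∀ μ ν : ℂ, μ ≠ 0 →
      (∀ z : ℂ, μ * starRingEnd ℂ ((starRingEnd ℂ z) ^ d + c) + ν =
        (starRingEnd ℂ (μ * starRingEnd ℂ z + ν)) ^ d + c) →
      ν = 0 ∧ μ ^ (d + 1) = 1 ∧ μ * starRingEnd ℂ μ = 1 ∧ μ * starRingEnd ℂ c = c :=
    anti_key d hd c
  have hprim := Complex.isPrimitiveRoot_exp (d + 1) (Nat.succ_ne_zero d)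
  push_cast at hprim
  set w := Complex.exp (2 * Real.pi * Complex.I / ((d : ℂ) + 1)) with hw
  have hw0 : w ≠ 0 := Complex.exp_ne_zero _
  refine ⟨⟨?_, ?_⟩, ?_⟩
  · rintro ⟨μ, ν, hμ, h⟩
    obtain ⟨-, h1, -, h3⟩ := key μ ν hμ h
    obtain ⟨i, -, hi⟩ := hprim.eq_pow_of_pow_eq_one h1
    refine ⟨-(i : ℤ), ?_⟩
    rw [zpow_neg, zpow_natCast, hi, ← h3]
    field_simp
    simp [h3]
  · rintro ⟨j, hj⟩
    have hj0 : w ^ j ≠ 0 := zpow_ne_zero _ hw0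
    have hp : (w ^ j) ^ (d + 1) = 1 := by
      rw [← zpow_natCast, zpow_comm, zpow_natCast, hprim.pow_eq_one, one_zpow]
    have hn : ‖w ^ j‖ = 1 := Complex.norm_eq_one_of_pow_eq_one hp (Nat.succ_ne_zero d)
    have hc : starRingEnd ℂ (w ^ j) * w ^ j = 1 := by
      rw [mul_comm, Complex.mul_conj, Complex.normSq_eq_norm_sq, hn]; simp
    refine ⟨starRingEnd ℂ (w ^ j), 0, (map_ne_zero _).2 hj0, fun z => ?_⟩
    generalize w ^ j = u at *
    have hu : starRingEnd ℂ u = u ^ d := by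
      apply mul_right_cancel₀ hj0
      rw [hc, ← pow_succ, hp]
    simp only [map_add, map_mul, map_pow, Complex.conj_conj, add_zero, map_zero, mul_pow]
    rw [hj, ← hu]
    linear_combination c * hc
  · intro μ ν hμ h
    obtain ⟨h0, h1, h2, -⟩ := key μ ν hμ h
    refine ⟨h0, h1, fun z => ?_⟩
    subst h0
    simp only [map_add, map_mul, Complex.conj_conj, add_zero, map_zero]
    linear_combination z * h2
end
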